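/- Assume the partition-of-unity property Σ_{j ∈ ι} c i j + c∂ i = 0 for every i ∈ ι, that c i i = 0 for all i, that dv i j > 0 for all j ≠ i, that d∂ i > 0 for all i, that u' satisfies the low-order scheme, and the CFL condition 1 + 2*τ*(D i)/(m i) ≥ 0 at a node i, where D i := −(Σ_{j ≠ i} dv i j) − d∂ i. Let A ⊆ S be a convex set such that u i ∈ A, the bar states ū i j ∈ A for all j ≠ i, and ū∂ i ∈ A, where ū i j := (1/2) • (u j + u i) − (1/(2 * dv i j)) • ((f (u j) − f (u i))·(c i j)) and ū∂ i := (1/2) • (u∂ i + u i) − (1/(2 * d∂ i)) • ((f (u∂ i) − f (u i))·(c∂ i)). Then the update satisfies u' i ∈ A. -/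

import Mathlib

open Finset

/-- Contraction of a flux value `G : Fin M → Fin d → ℝ` with a vector
`c : Fin d → ℝ`, yielding a state in `Fin M → ℝ`. -/
noncomputable def contr {M d : ℕ} (G : Fin M → Fin d → ℝ) (c : Fin d → ℝ) :
    Fin M → ℝ :=
  fun k => ∑ α, G k α * c α

/-! By the partition of unity, each flux `f (u j)` may be replaced by `f (u j) - f (u i)`. The term
`j = i` then vanishes, and every other term equals `-(2 * dv i j) • (ubar i j - u i)`. With the
boundary datum as one more neighbour, indexed by `none`, the scheme thus reads
`u' i = u i + ∑ j, (2 * τ * dv i j / m i) • (ubar i j - u i)`, and the CFL condition says that these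
nonnegative weights have sum at most one: the update is a convex combination of `u i` and the bar
states. -/

section

variable {𝕜 E F V κ : Type*} [Field 𝕜] [AddCommGroup E] [Module 𝕜 E]
  [AddCommGroup F] [Module 𝕜 F] [AddCommGroup V] [Module 𝕜 V]

theorem add_sum_smul_sub_mem_of_convex [LinearOrder 𝕜] [IsStrictOrderedRing 𝕜] {A : Set E}
    (hA : Convex 𝕜 A) {s : Finset κ} {a : κ → 𝕜} {z : κ → E} {x : E} (hx : x ∈ A)
    (ha : ∀ j ∈ s, 0 ≤ a j) (ha_sum : ∑ j ∈ s, a j ≤ 1) (hz : ∀ j ∈ s, z j ∈ A) :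
    x + ∑ j ∈ s, a j • (z j - x) ∈ A := by
  have hcomb : ∑ o ∈ insertNone s, o.elim (1 - ∑ j ∈ s, a j) a • o.elim x z ∈ A := by
    refine hA.sum_mem (forall_mem_insertNone.2 ⟨?_, ha⟩) ?_ (forall_mem_insertNone.2 ⟨hx, hz⟩)
    · simpa using ha_sum
    · simp [sum_insertNone]
  convert hcomb using 1
  simp only [sum_insertNone, Option.elim, smul_sub, sum_sub_distrib, ← sum_smul, sub_smul, one_smul]
  abel

/-- The bar state between the states `v` and `w`: their mean, corrected by the flux difference in
the direction `c` divided by twice the graph viscosity `δ`. The contraction of flux values with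
directions is an arbitrary bilinear map `B`. -/
def barState (B : F →ₗ[𝕜] V →ₗ[𝕜] E) (f : E → F) (c : V) (δ : 𝕜) (v w : E) : E :=
  (1 / 2 : 𝕜) • (w + v) - (1 / (2 * δ)) • B (f w - f v) c

variable (B : F →ₗ[𝕜] V →ₗ[𝕜] E) (f : E → F)

theorem flux_sub_viscosity_eq_neg_smul_barState_sub [NeZero (2 : 𝕜)] (c : V) {δ : 𝕜} (hδ : δ ≠ 0)
    (v w : E) :
    B (f w - f v) c - δ • (w - v) = -((2 * δ) • (barState B f c δ v w - v)) := by
  have h2 : (2 : 𝕜) ≠ 0 := two_ne_zero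
  rw [barState]
  match_scalars <;> field_simp
  all_goals ring

theorem eq_add_sum_smul_barState_sub [NeZero (2 : 𝕜)] {s : Finset κ} {c : κ → V} {δ : κ → 𝕜}
    {w : κ → E} {v v' : E} {m τ : 𝕜} (hm : m ≠ 0) (hδ : ∀ j ∈ s, δ j ≠ 0)
    (hupdate : m • (v' - v) +
      τ • ∑ j ∈ s, (B (f (w j) - f v) (c j) - δ j • (w j - v)) = 0) :
    v' = v + ∑ j ∈ s, (2 * τ * δ j / m) • (barState B f (c j) (δ j) v (w j) - v) := by
  have hbar : m • (v' - v) = τ • ∑ j ∈ s, (2 * δ j) • (barState B f (c j) (δ j) v (w j) - v) := by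
    rwa [sum_congr rfl fun j hj ↦
      flux_sub_viscosity_eq_neg_smul_barState_sub B f (c j) (hδ j hj) v (w j),
      sum_neg_distrib, smul_neg, ← sub_eq_add_neg, sub_eq_zero] at hupdate
  rw [← sub_eq_iff_eq_add', ← inv_smul_smul₀ hm (v' - v), hbar, smul_sum, smul_sum]
  refine sum_congr rfl fun j _ ↦ ?_
  module

theorem sum_apply_sub_of_sum_eq_zero {s : Finset κ} {c : κ → V} (hc : ∑ j ∈ s, c j = 0)
    (g : κ → F) (g₀ : F) :
    ∑ j ∈ s, B (g j - g₀) (c j) = ∑ j ∈ s, B (g j) (c j) := by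
  simp only [map_sub, LinearMap.sub_apply, sum_sub_distrib]
  rw [← map_sum, hc, map_zero, sub_zero]

variable [LinearOrder 𝕜] [IsStrictOrderedRing 𝕜]

theorem mem_of_convex_of_barState_mem {s : Finset κ} {c : κ → V} {δ : κ → 𝕜}
    {w : κ → E} {v v' : E} {m τ : 𝕜} (hm : 0 < m) (hτ : 0 ≤ τ) (hδ : ∀ j ∈ s, 0 < δ j)
    (hupdate : m • (v' - v) +
      τ • ∑ j ∈ s, (B (f (w j) - f v) (c j) - δ j • (w j - v)) = 0)
    (hCFL : 2 * τ * (∑ j ∈ s, δ j) / m ≤ 1) {A : Set E} (hA : Convex 𝕜 A) (hv : v ∈ A)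
    (hbar : ∀ j ∈ s, barState B f (c j) (δ j) v (w j) ∈ A) :
    v' ∈ A := by
  rw [eq_add_sum_smul_barState_sub B f hm.ne' (fun j hj ↦ (hδ j hj).ne') hupdate]
  refine add_sum_smul_sub_mem_of_convex hA hv (fun j hj ↦ ?_) ?_ hbar
  · have := hδ j hj
    positivity
  · rwa [← sum_div, ← mul_sum]

theorem lowOrder_invariant_set_general {ι : Type*} [DecidableEq ι] {s : Finset ι} {i : ι}
    {m τ : 𝕜} (hm : 0 < m) (hτ : 0 ≤ τ) {c : ι → V} {dv : ι → 𝕜} {cB : V} {dB : 𝕜}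
    {u : ι → E} {uB u' : E} (hpart : ∑ j ∈ s, c j + cB = 0)
    (hdv : ∀ j ∈ s, j ≠ i → 0 < dv j) (hdB : 0 < dB)
    (hscheme : m • (u' - u i) +
      τ • ((∑ j ∈ s, (B (f (u j)) (c j) - dv j • (u j - u i))) +
        B (f uB) cB - dB • (uB - u i)) = 0)
    (hCFL : 0 ≤ 1 + 2 * τ * (-(∑ j ∈ s.erase i, dv j) - dB) / m)
    {A : Set E} (hA : Convex 𝕜 A) (hui : u i ∈ A)
    (hbar : ∀ j ∈ s, j ≠ i → barState B f (c j) (dv j) (u i) (u j) ∈ A)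
    (hbarB : barState B f cB dB (u i) uB ∈ A) :
    u' ∈ A := by
  let cO (o : Option ι) : V := o.elim cB c
  let δ (o : Option ι) : 𝕜 := o.elim dB dv
  let w (o : Option ι) : E := o.elim uB u
  have hcO : ∑ o ∈ insertNone s, cO o = 0 := by
    rw [sum_insertNone, add_comm]
    exact hpart
  have hsum : ∑ o ∈ insertNone (s.erase i), (B (f (w o) - f (u i)) (cO o) - δ o • (w o - u i)) =
      (∑ j ∈ s, (B (f (u j)) (c j) - dv j • (u j - u i))) + B (f uB) cB - dB • (uB - u i) := calc
    _ = ∑ o ∈ insertNone s, (B (f (w o) - f (u i)) (cO o) - δ o • (w o - u i)) := by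
      rw [sum_insertNone, sum_insertNone, sum_erase _ (by simp [w])]
    _ = ∑ o ∈ insertNone s, (B (f (w o)) (cO o) - δ o • (w o - u i)) := by
      rw [sum_sub_distrib, sum_sub_distrib,
        sum_apply_sub_of_sum_eq_zero B hcO (fun o ↦ f (w o))]
    _ = _ := by
      rw [sum_insertNone, add_comm, add_sub_assoc]
      rfl
  rw [← hsum] at hscheme
  refine mem_of_convex_of_barState_mem B f hm hτ (forall_mem_insertNone.2 ⟨hdB, fun j hj ↦ ?_⟩)
    hscheme ?_ hA hui (forall_mem_insertNone.2 ⟨hbarB, fun j hj ↦ ?_⟩)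
  · exact hdv j (mem_of_mem_erase hj) (ne_of_mem_erase hj)
  · simp only [sum_insertNone, δ, Option.elim]
    linear_combination hCFL
  · exact hbar j (mem_of_mem_erase hj) (ne_of_mem_erase hj)

end

/-- The contraction `contr` bundled as a bilinear map, so that it can serve as the `B` of
`barState`. -/
noncomputable def contrBilin (M d : ℕ) :
    (Fin M → Fin d → ℝ) →ₗ[ℝ] (Fin d → ℝ) →ₗ[ℝ] (Fin M → ℝ) :=
  (Matrix.mulVecBilin ℝ ℝ).comp (Matrix.ofLinearEquiv ℝ).toLinearMap

theorem contrBilin_apply {M d : ℕ} (G : Fin M → Fin d → ℝ) (c : Fin d → ℝ) :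
    contrBilin M d G c = contr G c :=
  rfl

/-- Invariant-set property of the low-order update: `cB`, `dB`, `uB` play the
roles of the boundary data `c∂`, `d∂`, `u∂`; `ubar` and `ubarB` are the bar
states, and `D` the diagonal viscosity. -/
theorem lowOrder_invariant_set
    {d M : ℕ} (hd : 1 ≤ d) (hM : 1 ≤ M)
    {ι : Type*} [Fintype ι] [DecidableEq ι]
    (m : ι → ℝ) (hm : ∀ i, 0 < m i)
    (τ : ℝ) (hτ : 0 < τ)
    (c : ι → ι → (Fin d → ℝ)) (dv : ι → ι → ℝ)
    (cB : ι → (Fin d → ℝ)) (dB : ι → ℝ)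
    (f : (Fin M → ℝ) → (Fin M → Fin d → ℝ))
    (u : ι → (Fin M → ℝ)) (uB : ι → (Fin M → ℝ)) (u' : ι → (Fin M → ℝ))
    (hpart : ∀ i, ∑ j, c i j + cB i = 0)
    (hcii : ∀ i, c i i = 0)
    (hdv : ∀ i j, j ≠ i → 0 < dv i j)
    (hdB : ∀ i, 0 < dB i)
    (hscheme : ∀ i,
      m i • (u' i - u i) +
        τ • ((∑ j, (contr (f (u j)) (c i j) - dv i j • (u j - u i))) +
          contr (f (uB i)) (cB i) - dB i • (uB i - u i)) = 0)
    (ubar : ι → ι → (Fin M → ℝ))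
    (hubar : ∀ i j, ubar i j =
      (1 / 2 : ℝ) • (u j + u i) -
        (1 / (2 * dv i j)) • contr (f (u j) - f (u i)) (c i j))
    (ubarB : ι → (Fin M → ℝ))
    (hubarB : ∀ i, ubarB i =
      (1 / 2 : ℝ) • (uB i + u i) -
        (1 / (2 * dB i)) • contr (f (uB i) - f (u i)) (cB i))
    (D : ι → ℝ)
    (hD : ∀ i, D i = -(∑ j ∈ Finset.univ.erase i, dv i j) - dB i)
    (i : ι)
    (hCFL : 0 ≤ 1 + 2 * τ * D i / m i)
    (A : Set (Fin M → ℝ)) (hA : Convex ℝ A)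
    (hui : u i ∈ A)
    (hbar : ∀ j, j ≠ i → ubar i j ∈ A)
    (hbarB : ubarB i ∈ A) :
    u' i ∈ A := by
  simp only [hubar, hubarB, hD, ← contrBilin_apply] at hscheme hbar hbarB hCFL
  exact lowOrder_invariant_set_general (contrBilin M d) f (hm i) hτ.le (hpart i)
    (fun j _ ↦ hdv i j) (hdB i) (hscheme i) hCFL hA hui (fun j _ ↦ hbar j) hbarB
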